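/- arXiv:2408.15094 — 2 statements merged into one kernel-verified Lean document; each statement's English description precedes it below -/
import Mathlib

section
/- Let ν₁, …, ν_n be probability measures on a measurable space X, let w₁, …, w_n ≥ 0 with Σᵢ wᵢ = 1, and set ν̄ = Σᵢ wᵢ νᵢ. Then for every probability measure p on X, the compensation identity holds in [0, ∞]: Σᵢ wᵢ KL(νᵢ‖p) = KL(ν̄‖p) + Σᵢ wᵢ KL(νᵢ‖ν̄). -/
open MeasureTheory

/-- The Kullback–Leibler divergence `KL(μ‖ν)`, with values in `EReal`. -/
noncomputable def KL {X : Type*} [MeasurableSpace X] (μ ν : Measure X) : EReal :=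
  open Classical in
  if μ ≪ ν ∧ Integrable (llr μ ν) μ then ((∫ x, llr μ ν x ∂μ : ℝ) : EReal) else ⊤

/-!
Every component `νᵢ` of positive weight is dominated by a multiple of the mixture `ν̄`, so its
density with respect to `ν̄` is bounded and `KL(νᵢ‖ν̄)` is finite. The chain rule for densities
gives `log (dνᵢ/dp) = log (dνᵢ/dν̄) + log (dν̄/dp)` almost everywhere for `νᵢ`; integrating against
`νᵢ` and averaging over `i` yields the identity when `KL(ν̄‖p)` is finite. When it is infinite, the
finiteness of `KL(νᵢ‖ν̄)` forces some component of positive weight to have infinite divergence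
from `p`.
-/

open scoped NNReal

section ExtendedReal

variable {ι : Type*} {s : Finset ι}

lemma ereal_coe_sum (s : Finset ι) (f : ι → ℝ) :
    ((∑ i ∈ s, f i : ℝ) : EReal) = ∑ i ∈ s, (f i : EReal) :=
  map_sum (⟨⟨Real.toEReal, EReal.coe_zero⟩, EReal.coe_add⟩ : ℝ →+ EReal) f s

lemma ereal_sum_ne_bot {f : ι → EReal} (hf : ∀ i ∈ s, f i ≠ ⊥) : ∑ i ∈ s, f i ≠ ⊥ := by
  intro h
  obtain ⟨i, hi, hfi⟩ := WithBot.sum_eq_bot_iff.mp h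
  exact hf i hi hfi

lemma ereal_sum_eq_top {f : ι → EReal} (hf : ∀ i ∈ s, f i ≠ ⊥) (htop : ∃ i ∈ s, f i = ⊤) :
    ∑ i ∈ s, f i = ⊤ := by
  classical
  obtain ⟨i, hi, hfi⟩ := htop
  rw [← Finset.add_sum_erase s f hi, hfi]
  exact EReal.top_add_of_ne_bot (ereal_sum_ne_bot fun j hj ↦ hf j (Finset.mem_of_mem_erase hj))

end ExtendedReal

section LogLikelihoodRatio

variable {X : Type*} {mX : MeasurableSpace X} {μ ν p : Measure X}

lemma klFun_le_one {x : ℝ} (h₀ : 0 ≤ x) (h₁ : x ≤ 1) : InformationTheory.klFun x ≤ 1 := by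
  have hlog : x * Real.log x ≤ 0 := Real.mul_log_nonpos h₀ h₁
  rw [InformationTheory.klFun_apply]
  linarith

lemma integrable_llr_of_le [IsFiniteMeasure ν] (h : μ ≤ ν) : Integrable (llr μ ν) μ := by
  have : IsFiniteMeasure μ := isFiniteMeasure_of_le ν h
  rw [← InformationTheory.integrable_klFun_rnDeriv_iff h.absolutelyContinuous]
  refine Integrable.of_bound (C := 1) (Measurable.aestronglyMeasurable (by fun_prop)) ?_
  filter_upwards [Measure.rnDeriv_le_one_of_le h] with x hx
  have hle : (μ.rnDeriv ν x).toReal ≤ 1 := ENNReal.toReal_le_of_le_ofReal zero_le_one (by simpa)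
  rw [Real.norm_of_nonneg (InformationTheory.klFun_nonneg ENNReal.toReal_nonneg)]
  exact klFun_le_one ENNReal.toReal_nonneg hle

lemma integrable_llr_of_le_smul [IsFiniteMeasure ν] {c : ℝ≥0} (h : μ ≤ c • ν) :
    Integrable (llr μ ν) μ := by
  have : IsFiniteMeasure μ := isFiniteMeasure_of_le _ h
  have hμν : μ ≪ ν := Measure.absolutelyContinuous_of_le_smul (c := c) h
  rcases eq_or_ne c 0 with rfl | hc
  · have hμ : μ = 0 := le_antisymm (by simpa using h) (Measure.zero_le μ)
    simp [hμ]
  · have h_int : Integrable (fun x ↦ llr μ ν x - Real.log c) μ :=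
      (integrable_congr (llr_smul_nnreal_right hμν c hc)).mp (integrable_llr_of_le h)
    exact (h_int.add (integrable_const (Real.log c))).congr (.of_forall fun x ↦ by simp)

variable [SigmaFinite μ] [SigmaFinite ν]

lemma toReal_rnDeriv_pos (hμν : μ ≪ ν) : ∀ᵐ x ∂μ, 0 < (μ.rnDeriv ν x).toReal := by
  filter_upwards [Measure.rnDeriv_pos hμν, hμν.ae_le (Measure.rnDeriv_lt_top μ ν)]
    with x hpos hlt
  exact ENNReal.toReal_pos hpos.ne' hlt.ne

variable [SigmaFinite p]

lemma llr_ae_eq_add (hμν : μ ≪ ν) (hνp : ν ≪ p) :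
    llr μ p =ᵐ[μ] fun x ↦ llr μ ν x + llr ν p x := by
  have hμp : μ ≪ p := hμν.trans hνp
  filter_upwards [hμp.ae_le (Measure.rnDeriv_mul_rnDeriv (κ := p) hμν),
    toReal_rnDeriv_pos hμν, hμν.ae_le (toReal_rnDeriv_pos hνp)]
    with x hmul hpos_μν hpos_νp
  rw [llr, llr, llr, ← hmul, Pi.mul_apply, ENNReal.toReal_mul,
    Real.log_mul hpos_μν.ne' hpos_νp.ne']

lemma integrable_llr_iff_of_integrable_llr (hμν : μ ≪ ν) (hνp : ν ≪ p)
    (h_int : Integrable (llr μ ν) μ) :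
    Integrable (llr μ p) μ ↔ Integrable (llr ν p) μ := by
  rw [integrable_congr (llr_ae_eq_add hμν hνp)]
  exact integrable_add_iff_integrable_right' h_int

end LogLikelihoodRatio

section Mixture

variable {X ι E : Type*} {mX : MeasurableSpace X} [NormedAddCommGroup E]
  {ν : ι → Measure X} {w : ι → ℝ≥0} {s : Finset ι} {f : X → E}

lemma le_inv_smul_sum_smul {i : ι} (hi : i ∈ s) (hwi : w i ≠ 0) :
    ν i ≤ (w i)⁻¹ • ∑ j ∈ s, w j • ν j := by
  calc ν i = (w i)⁻¹ • w i • ν i := (inv_smul_smul₀ hwi _).symm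
    _ ≤ (w i)⁻¹ • ∑ j ∈ s, w j • ν j := by
      gcongr
      exact Finset.single_le_sum (f := fun j ↦ w j • ν j) (fun _ _ ↦ Measure.zero_le _) hi

lemma absolutelyContinuous_sum_smul {i : ι} (hi : i ∈ s) (hwi : w i ≠ 0) :
    ν i ≪ ∑ j ∈ s, w j • ν j :=
  Measure.absolutelyContinuous_of_le_smul (c := ((w i)⁻¹ : ℝ≥0)) (le_inv_smul_sum_smul hi hwi)

lemma sum_smul_absolutelyContinuous_iff {p : Measure X} :
    ∑ i ∈ s, w i • ν i ≪ p ↔ ∀ i ∈ s, w i ≠ 0 → ν i ≪ p := by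
  refine ⟨fun h i hi hwi ↦ (absolutelyContinuous_sum_smul hi hwi).trans h, fun h t ht ↦ ?_⟩
  rw [Measure.finsetSum_apply]
  refine Finset.sum_eq_zero fun i hi ↦ ?_
  rcases eq_or_ne (w i) 0 with hwi | hwi
  · simp [hwi]
  · simp [h i hi hwi ht]

lemma integrable_sum_smul_iff :
    Integrable f (∑ i ∈ s, w i • ν i) ↔ ∀ i ∈ s, w i ≠ 0 → Integrable f (ν i) := by
  rw [integrable_finsetSum_measure]
  refine forall₂_congr fun i _ ↦ ?_
  rcases eq_or_ne (w i) 0 with hwi | hwi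
  · simp [hwi]
  · simpa [hwi] using integrable_smul_measure (μ := ν i) (f := f) (ENNReal.coe_ne_zero.mpr hwi)
      ENNReal.coe_ne_top

lemma integral_sum_smul [NormedSpace ℝ E] (hf : Integrable f (∑ i ∈ s, w i • ν i)) :
    ∫ x, f x ∂(∑ i ∈ s, w i • ν i) = ∑ i ∈ s, w i • ∫ x, f x ∂ν i := by
  rw [integral_finsetSum_measure (integrable_finsetSum_measure.mp hf)]
  simp only [integral_smul_nnreal_measure]

end Mixture

section Divergence

variable {X : Type*} [MeasurableSpace X] {μ ν p : Measure X}

lemma KL_ne_top_iff : KL μ ν ≠ ⊤ ↔ μ ≪ ν ∧ Integrable (llr μ ν) μ := by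
  simp [KL]

lemma KL_eq_integral (h : KL μ ν ≠ ⊤) : KL μ ν = (∫ x, llr μ ν x ∂μ : ℝ) :=
  if_pos (KL_ne_top_iff.mp h)

/-- Unlike `InformationTheory.klDiv`, `KL` has no correction for total masses, so for finite
measures it can be negative; for sums of divergences it is enough that it avoids `⊥`. -/
lemma KL_ne_bot (μ ν : Measure X) : KL μ ν ≠ ⊥ := by
  rcases eq_or_ne (KL μ ν) ⊤ with h | h
  · simp [h]
  · simp [KL_eq_integral h]

lemma coe_mul_KL_ne_bot (c : ℝ≥0) (μ ν : Measure X) : ((c : ℝ) : EReal) * KL μ ν ≠ ⊥ := by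
  simp [EReal.mul_ne_bot, KL_ne_bot]

lemma KL_ne_top_of_le_smul [IsFiniteMeasure ν] {c : ℝ≥0} (h : μ ≤ c • ν) : KL μ ν ≠ ⊤ :=
  KL_ne_top_iff.mpr
    ⟨Measure.absolutelyContinuous_of_le_smul (c := c) h, integrable_llr_of_le_smul h⟩

variable [SigmaFinite μ] [SigmaFinite ν] [SigmaFinite p]

lemma KL_ne_top_iff_integrable_llr (hμν : KL μ ν ≠ ⊤) (hνp : ν ≪ p) :
    KL μ p ≠ ⊤ ↔ Integrable (llr ν p) μ := by
  obtain ⟨hac, h_int⟩ := KL_ne_top_iff.mp hμν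
  rw [KL_ne_top_iff, integrable_llr_iff_of_integrable_llr hac hνp h_int]
  exact and_iff_right (hac.trans hνp)

lemma KL_eq_integral_add (hμν : KL μ ν ≠ ⊤) (hνp : ν ≪ p) (h_int : Integrable (llr ν p) μ) :
    KL μ p = (∫ x, llr ν p x ∂μ : ℝ) + KL μ ν := by
  obtain ⟨hac, h_int_μν⟩ := KL_ne_top_iff.mp hμν
  have hμp : KL μ p ≠ ⊤ := (KL_ne_top_iff_integrable_llr hμν hνp).mpr h_int
  rw [KL_eq_integral hμp, KL_eq_integral hμν, integral_congr_ae (llr_ae_eq_add hac hνp),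
    integral_add h_int_μν h_int, add_comm, EReal.coe_add]

end Divergence

section Compensation

variable {X ι : Type*} [MeasurableSpace X] {ν : ι → Measure X} [∀ i, IsFiniteMeasure (ν i)]
  {w : ι → ℝ≥0} {s : Finset ι} {p : Measure X} [SigmaFinite p]

lemma KL_sum_smul_right_ne_top {i : ι} (hi : i ∈ s) (hwi : w i ≠ 0) :
    KL (ν i) (∑ j ∈ s, w j • ν j) ≠ ⊤ :=
  KL_ne_top_of_le_smul (le_inv_smul_sum_smul hi hwi)

lemma KL_sum_smul_left_ne_top_iff :
    KL (∑ i ∈ s, w i • ν i) p ≠ ⊤ ↔ ∀ i ∈ s, w i ≠ 0 → KL (ν i) p ≠ ⊤ := by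
  rw [KL_ne_top_iff, integrable_sum_smul_iff]
  constructor
  · rintro ⟨hac, h_int⟩ i hi hwi
    exact (KL_ne_top_iff_integrable_llr (KL_sum_smul_right_ne_top hi hwi) hac).mpr (h_int i hi hwi)
  · intro h
    have hac : ∑ i ∈ s, w i • ν i ≪ p :=
      sum_smul_absolutelyContinuous_iff.mpr fun i hi hwi ↦ (KL_ne_top_iff.mp (h i hi hwi)).1
    exact ⟨hac, fun i hi hwi ↦
      (KL_ne_top_iff_integrable_llr (KL_sum_smul_right_ne_top hi hwi) hac).mp (h i hi hwi)⟩

lemma sum_mul_KL_eq_add_of_ne_top (h : KL (∑ i ∈ s, w i • ν i) p ≠ ⊤) :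
    ∑ i ∈ s, ((w i : ℝ) : EReal) * KL (ν i) p
      = KL (∑ i ∈ s, w i • ν i) p
        + ∑ i ∈ s, ((w i : ℝ) : EReal) * KL (ν i) (∑ j ∈ s, w j • ν j) := by
  obtain ⟨hac, h_int⟩ := KL_ne_top_iff.mp h
  rw [KL_eq_integral h, integral_sum_smul h_int, ereal_coe_sum, ← Finset.sum_add_distrib]
  refine Finset.sum_congr rfl fun i hi ↦ ?_
  rcases eq_or_ne (w i) 0 with hwi | hwi
  · simp [hwi]
  · rw [KL_eq_integral_add (KL_sum_smul_right_ne_top hi hwi) hac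
        (integrable_sum_smul_iff.mp h_int i hi hwi),
      EReal.left_distrib_of_nonneg_of_ne_top (by simp) (EReal.coe_ne_top _), NNReal.smul_def,
      smul_eq_mul, EReal.coe_mul]

lemma sum_mul_KL_eq_top (h : KL (∑ i ∈ s, w i • ν i) p = ⊤) :
    ∑ i ∈ s, ((w i : ℝ) : EReal) * KL (ν i) p = ⊤ := by
  obtain ⟨i, hi, hwi, htop⟩ : ∃ i ∈ s, w i ≠ 0 ∧ KL (ν i) p = ⊤ := by
    by_contra! hne
    exact KL_sum_smul_left_ne_top_iff.mpr hne h
  refine ereal_sum_eq_top (fun j _ ↦ coe_mul_KL_ne_bot _ _ _) ⟨i, hi, ?_⟩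
  rw [htop, EReal.coe_mul_top_of_pos (NNReal.coe_pos.mpr (pos_iff_ne_zero.mpr hwi))]

end Compensation

theorem stmt4_general {X ι : Type*} [MeasurableSpace X] (s : Finset ι)
    (ν : ι → Measure X) [∀ i, IsFiniteMeasure (ν i)] (w : ι → ℝ≥0)
    (p : Measure X) [SigmaFinite p] :
    ∑ i ∈ s, ((w i : ℝ) : EReal) * KL (ν i) p
      = KL (∑ i ∈ s, w i • ν i) p
        + ∑ i ∈ s, ((w i : ℝ) : EReal) * KL (ν i) (∑ j ∈ s, w j • ν j) := by
  rcases eq_or_ne (KL (∑ i ∈ s, w i • ν i) p) ⊤ with h | h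
  · have hbot := ereal_sum_ne_bot (s := s) fun i _ ↦
      coe_mul_KL_ne_bot (w i) (ν i) (∑ j ∈ s, w j • ν j)
    rw [sum_mul_KL_eq_top h, h, EReal.top_add_of_ne_bot hbot]
  · exact sum_mul_KL_eq_add_of_ne_top h

/-- compensation identity: for probability measures `ν₁, …, ν_n`,
nonnegative weights `w` summing to `1`, and `ν̄ = ∑ i, wᵢ νᵢ`, one has, for every
probability measure `p`, the identity (in `[0, ∞]`)
`∑ i, wᵢ KL(νᵢ‖p) = KL(ν̄‖p) + ∑ i, wᵢ KL(νᵢ‖ν̄)`. -/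
theorem stmt4 {X : Type*} [MeasurableSpace X] {n : ℕ}
    (ν : Fin n → Measure X) (hν : ∀ i, IsProbabilityMeasure (ν i))
    (w : Fin n → ℝ) (hw : ∀ i, 0 ≤ w i) (hw1 : ∑ i, w i = 1)
    (νbar : Measure X) (hνbar : νbar = ∑ i, ENNReal.ofReal (w i) • ν i)
    (p : Measure X) (hp : IsProbabilityMeasure p) :
    ∑ i, (w i : EReal) * KL (ν i) p
      = KL νbar p + ∑ i, (w i : EReal) * KL (ν i) νbar := by
  lift w to Fin n → ℝ≥0 using hw
  simpa [hνbar] using stmt4_general Finset.univ ν w p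
end

section
/- Let H be a real Hilbert space, c₀ ∈ H, and ℓ₀(x) = ‖x − c₀‖². Let ℓ₁, …, ℓ_m : H → ℝ be convex and Fréchet differentiable with 2-Lipschitz gradients: ‖∇ℓᵢ(x) − ∇ℓᵢ(y)‖ ≤ 2‖x − y‖ for all x, y. Let Λ ⊆ ℝ₊ᵐ be convex, and suppose that for each λ ∈ Λ the function x ↦ ℓ₀(x) + Σᵢ λᵢ ℓᵢ(x) has a global minimizer x*(λ) ∈ H, and that there is σ > 0 with ‖Σᵢ vᵢ ∇ℓᵢ(x*(λ))‖ ≥ σ‖v‖ for all v ∈ ℝᵐ and λ ∈ Λ. Define g(λ) = min_x [ℓ₀(x) + Σᵢ λᵢ ℓᵢ(x)]. Then for all λ₁, λ₂ ∈ Λ one has −(ℓ(x*(λ₂)) − ℓ(x*(λ₁)))ᵀ(λ₂ − λ₁) ≥ (1/2)(σ/(1 + ‖λ₁‖₁))² ‖λ₂ − λ₁‖², where ℓ(x) = (ℓ₁(x), …, ℓ_m(x)); consequently g is μ-strongly concave on Λ with μ = (1/2)(σ/(1 + sup_{λ∈Λ} ‖λ‖₁))² whenever sup_{λ∈Λ}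 ‖λ‖₁ < ∞. -/
/-!
Strong convexity makes the Lagrangian at `λ` grow quadratically away from its minimizer `x*(λ)`, so
both claims reduce to a lower bound on how far the minimizer moves with the multiplier. Since
`x*(λ₁)` and `x*(λ₂)` are critical for their own Lagrangians, `∑ i, (λ₂ - λ₁)ᵢ ∇ℓᵢ(x*(λ₂))`, a
vector of norm at least `σ ‖λ₂ - λ₁‖`, is the change between the two points of the gradient of the
single Lagrangian at `λ₁`, whose Lipschitz constant is at most `L₀ + L ‖λ₁‖₁` if `L₀` and `L` are
those of `∇ℓ₀` and of the `∇ℓᵢ`.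
-/

open Set Filter Topology NNReal

section Convexity

variable {E : Type*} [NormedAddCommGroup E] [NormedSpace ℝ E] {s : Set E}

theorem add_modulus_le_of_isMinOn_of_uniformConvexOn {φ : ℝ → ℝ} {f : E → ℝ} {x y : E}
    (hf : UniformConvexOn s φ f) (hmin : IsMinOn f s x) (hx : x ∈ s) (hy : y ∈ s) :
    f x + φ ‖x - y‖ ≤ f y := by
  have scaled : ∀ t ∈ Ioo (0 : ℝ) 1, (1 - t) * φ ‖x - y‖ ≤ f y - f x := by
    rintro t ⟨ht0, ht1⟩
    have ht : 0 ≤ 1 - t := sub_nonneg.2 ht1.le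
    have hle : f x ≤ f ((1 - t) • x + t • y) := hmin (hf.1 hx hy ht ht0.le (by ring))
    have hconv := hf.2 hx hy ht ht0.le (by ring)
    simp only [smul_eq_mul] at hconv
    refine le_of_mul_le_mul_left ?_ ht0
    linarith
  have hlim : Tendsto (fun t : ℝ ↦ (1 - t) * φ ‖x - y‖) (𝓝[>] 0) (𝓝 ((1 - 0) * φ ‖x - y‖)) :=
    (Continuous.tendsto (by fun_prop) 0).mono_left nhdsWithin_le_nhds
  have hφ := le_of_tendsto hlim (eventually_of_mem (Ioo_mem_nhdsGT zero_lt_one) scaled)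
  linarith

theorem convexOn_sum_smul {ι : Type*} [Fintype ι] {f : ι → E → ℝ} {w : ι → ℝ} (hs : Convex ℝ s)
    (hf : ∀ i, ConvexOn ℝ s (f i)) (hw : ∀ i, 0 ≤ w i) :
    ConvexOn ℝ s fun x ↦ ∑ i, w i • f i x := by
  have hsum : ConvexOn ℝ s (∑ i, fun x ↦ w i • f i x) :=
    Finset.sum_induction _ (ConvexOn ℝ s) (fun _ _ ↦ ConvexOn.add) (convexOn_const 0 hs)
      fun i _ ↦ (hf i).smul (hw i)
  simpa only [Finset.sum_fn] using hsum

end Convexity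

theorem lipschitzWith_smul_sub {E : Type*} [SeminormedAddCommGroup E] [NormedSpace ℝ E] (r : ℝ)
    (c : E) : LipschitzWith ‖r‖₊ fun x ↦ r • (x - c) :=
  LipschitzWith.of_dist_le_mul fun x y ↦ by simp [dist_smul₀]

section SquaredDistance

variable {H : Type*} [NormedAddCommGroup H] [InnerProductSpace ℝ H]

theorem strongConvexOn_sq_norm_sub {s : Set H} (hs : Convex ℝ s) (c : H) :
    StrongConvexOn s 2 fun x ↦ ‖x - c‖ ^ 2 := by
  rw [strongConvexOn_iff_convex]
  have haffine : (fun x : H ↦ ‖x - c‖ ^ 2 - 2 / 2 * ‖x‖ ^ 2) =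
      fun x ↦ ((-2 : ℝ) • innerₛₗ ℝ c) x + ‖c‖ ^ 2 := by
    funext x
    simp only [norm_sub_sq_real, real_inner_comm c x, LinearMap.smul_apply, innerₛₗ_apply_apply,
      smul_eq_mul]
    ring
  rw [haffine]
  exact (LinearMap.convexOn _ hs).add_const _

theorem hasGradientAt_sq_norm_sub [CompleteSpace H] (c x : H) :
    HasGradientAt (fun y ↦ ‖y - c‖ ^ 2) ((2 : ℝ) • (x - c)) x := by
  rw [hasGradientAt_iff_hasFDerivAt]
  refine ((hasFDerivAt_id x).sub_const c).norm_sq.congr_fderiv ?_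
  ext y
  simp

end SquaredDistance

theorem eq_zero_of_hasGradientAt_of_isLocalMin {H : Type*} [NormedAddCommGroup H]
    [InnerProductSpace ℝ H] [CompleteSpace H] {f : H → ℝ} {f' x : H}
    (hf : HasGradientAt f f' x) (hmin : IsLocalMin f x) : f' = 0 := by
  simpa using hmin.hasFDerivAt_eq_zero hf.hasFDerivAt

section Lagrangian

variable {ι X F : Type*} [Fintype ι] [AddCommGroup F] [Module ℝ F]

/-- The Lagrangian `f₀ + ∑ i, l i • f i` with objective `f₀`, constraint functions `f` and
multiplier `l`. The functions may take values in any real vector space, so that the gradient of the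
Lagrangian of real functions is the Lagrangian of their gradients. -/
def lagrangian (f₀ : X → F) (f : ι → X → F) (l : ι → ℝ) (x : X) : F :=
  f₀ x + ∑ i, l i • f i x

theorem lagrangian_sub_lagrangian (f₀ : X → F) (f : ι → X → F) (l₁ l₂ : ι → ℝ) (x : X) :
    lagrangian f₀ f l₂ x - lagrangian f₀ f l₁ x = ∑ i, (l₂ i - l₁ i) • f i x := by
  simp only [lagrangian, add_sub_add_left_eq_sub, sub_smul, Finset.sum_sub_distrib]

theorem lagrangian_convex_combination (f₀ : X → F) (f : ι → X → F) (l₁ l₂ : ι → ℝ) (x : X)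
    {a b : ℝ} (hab : a + b = 1) :
    lagrangian f₀ f (a • l₁ + b • l₂) x =
      a • lagrangian f₀ f l₁ x + b • lagrangian f₀ f l₂ x := by
  have hf₀ : f₀ x = a • f₀ x + b • f₀ x := by rw [← add_smul, hab, one_smul]
  simp only [lagrangian, Pi.add_apply, Pi.smul_apply, smul_eq_mul, add_smul, mul_smul,
    Finset.sum_add_distrib, ← Finset.smul_sum, smul_add]
  nth_rewrite 1 [hf₀]
  abel

theorem le_lagrangian_convex_combination {f₀ : X → ℝ} {f : ι → X → ℝ} {l₁ l₂ : ι → ℝ}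
    {g₁ g₂ c a b : ℝ} {x : X} (ha : 0 ≤ a) (hb : 0 ≤ b) (hab : a + b = 1)
    (h₁ : g₁ + c * ∑ i, ((a • l₁ + b • l₂) i - l₁ i) ^ 2 ≤ lagrangian f₀ f l₁ x)
    (h₂ : g₂ + c * ∑ i, ((a • l₁ + b • l₂) i - l₂ i) ^ 2 ≤ lagrangian f₀ f l₂ x) :
    a * g₁ + b * g₂ + c * (a * b * ∑ i, (l₁ i - l₂ i) ^ 2) ≤
      lagrangian f₀ f (a • l₁ + b • l₂) x := by
  obtain rfl : b = 1 - a := by linarith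
  have hdist₁ : ∑ i, ((a • l₁ + (1 - a) • l₂) i - l₁ i) ^ 2 =
      (1 - a) ^ 2 * ∑ i, (l₁ i - l₂ i) ^ 2 := by
    simp only [Finset.mul_sum, Pi.add_apply, Pi.smul_apply, smul_eq_mul]
    exact Finset.sum_congr rfl fun i _ ↦ by ring
  have hdist₂ : ∑ i, ((a • l₁ + (1 - a) • l₂) i - l₂ i) ^ 2 =
      a ^ 2 * ∑ i, (l₁ i - l₂ i) ^ 2 := by
    simp only [Finset.mul_sum, Pi.add_apply, Pi.smul_apply, smul_eq_mul]
    exact Finset.sum_congr rfl fun i _ ↦ by ring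
  rw [hdist₁] at h₁
  rw [hdist₂] at h₂
  rw [lagrangian_convex_combination f₀ f l₁ l₂ x hab, smul_eq_mul, smul_eq_mul]
  linarith [mul_le_mul_of_nonneg_left h₁ ha, mul_le_mul_of_nonneg_left h₂ hb]

end Lagrangian

section LagrangianConvexity

variable {ι E : Type*} [Fintype ι] [NormedAddCommGroup E] [NormedSpace ℝ E] {s : Set E} {μ : ℝ}
  {f₀ : E → ℝ} {f : ι → E → ℝ}

theorem strongConvexOn_lagrangian {l : ι → ℝ}
    (hf₀ : StrongConvexOn s μ f₀) (hf : ∀ i, ConvexOn ℝ s (f i)) (hl : ∀ i, 0 ≤ l i) :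
    StrongConvexOn s μ (lagrangian f₀ f l) := by
  have h := hf₀.add (convexOn_sum_smul hf₀.1 hf hl).uniformConvexOn_zero
  rwa [add_zero] at h

theorem mul_sq_norm_sub_le_neg_sum_of_isMinOn_lagrangian {l₁ l₂ : ι → ℝ} {x₁ x₂ : E}
    (hx₁ : x₁ ∈ s) (hx₂ : x₂ ∈ s)
    (hcv₁ : StrongConvexOn s μ (lagrangian f₀ f l₁)) (hmin₁ : IsMinOn (lagrangian f₀ f l₁) s x₁)
    (hcv₂ : StrongConvexOn s μ (lagrangian f₀ f l₂)) (hmin₂ : IsMinOn (lagrangian f₀ f l₂) s x₂) :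
    μ * ‖x₁ - x₂‖ ^ 2 ≤ -∑ i, (f i x₂ - f i x₁) * (l₂ i - l₁ i) := by
  have hgrowth₁ := add_modulus_le_of_isMinOn_of_uniformConvexOn hcv₁ hmin₁ hx₁ hx₂
  have hgrowth₂ := add_modulus_le_of_isMinOn_of_uniformConvexOn hcv₂ hmin₂ hx₂ hx₁
  have hsum : ∑ i, (f i x₂ - f i x₁) * (l₂ i - l₁ i) =
      (lagrangian f₀ f l₂ x₂ - lagrangian f₀ f l₁ x₂) -
        (lagrangian f₀ f l₂ x₁ - lagrangian f₀ f l₁ x₁) := by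
    simp only [lagrangian_sub_lagrangian, ← Finset.sum_sub_distrib, smul_eq_mul]
    exact Finset.sum_congr rfl fun i _ ↦ by ring
  rw [norm_sub_rev x₂ x₁] at hgrowth₂
  linarith

end LagrangianConvexity

theorem hasGradientAt_lagrangian {ι H : Type*} [Fintype ι] [NormedAddCommGroup H]
    [InnerProductSpace ℝ H] [CompleteSpace H] {f₀ : H → ℝ} {f : ι → H → ℝ}
    {G₀ : H → H} {G : ι → H → H} {x : H} (hf₀ : HasGradientAt f₀ (G₀ x) x)
    (hf : ∀ i, HasGradientAt (f i) (G i x) x) (l : ι → ℝ) :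
    HasGradientAt (lagrangian f₀ f l) (lagrangian G₀ G l x) x := by
  simp only [hasGradientAt_iff_hasFDerivAt, lagrangian, map_add, map_sum, map_smul] at *
  exact hf₀.add (HasFDerivAt.fun_sum fun i _ ↦ (hf i).const_smul (l i))

section LagrangianGradient

variable {ι E F : Type*} [Fintype ι] [NormedAddCommGroup E] [NormedAddCommGroup F]
  [NormedSpace ℝ F] {G₀ : E → F} {G : ι → E → F} {L₀ L : ℝ≥0}

theorem norm_lagrangian_sub_lagrangian_le
    (hG₀ : LipschitzWith L₀ G₀) (hG : ∀ i, LipschitzWith L (G i)) (l : ι → ℝ) (x y : E) :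
    ‖lagrangian G₀ G l x - lagrangian G₀ G l y‖ ≤ (L₀ + L * ∑ i, |l i|) * ‖x - y‖ := by
  calc ‖lagrangian G₀ G l x - lagrangian G₀ G l y‖
      = ‖(G₀ x - G₀ y) + ∑ i, l i • (G i x - G i y)‖ := by
        simp only [lagrangian, add_sub_add_comm, smul_sub, Finset.sum_sub_distrib]
    _ ≤ ‖G₀ x - G₀ y‖ + ∑ i, |l i| * ‖G i x - G i y‖ := by
        refine (norm_add_le _ _).trans (add_le_add_right (norm_sum_le_of_le _ fun i _ ↦ ?_) _)
        rw [norm_smul, Real.norm_eq_abs]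
    _ ≤ L₀ * ‖x - y‖ + ∑ i, |l i| * (L * ‖x - y‖) := by
        gcongr with i
        · exact hG₀.norm_sub_le x y
        · exact (hG i).norm_sub_le x y
    _ = (L₀ + L * ∑ i, |l i|) * ‖x - y‖ := by
        rw [← Finset.sum_mul]
        ring

theorem norm_sum_smul_le_of_lagrangian_eq_zero
    (hG₀ : LipschitzWith L₀ G₀) (hG : ∀ i, LipschitzWith L (G i)) {l₁ l₂ : ι → ℝ} {x₁ x₂ : E}
    (h₁ : lagrangian G₀ G l₁ x₁ = 0) (h₂ : lagrangian G₀ G l₂ x₂ = 0) :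
    ‖∑ i, (l₂ i - l₁ i) • G i x₂‖ ≤ (L₀ + L * ∑ i, |l₁ i|) * ‖x₁ - x₂‖ := by
  rw [← lagrangian_sub_lagrangian G₀, h₂, ← h₁]
  exact norm_lagrangian_sub_lagrangian_le hG₀ hG l₁ x₁ x₂

theorem sq_div_mul_sum_sq_le_sq_norm_sub_of_lagrangian_eq_zero
    (hG₀ : LipschitzWith L₀ G₀) (hG : ∀ i, LipschitzWith L (G i)) {l₁ l₂ : ι → ℝ} {x₁ x₂ : E}
    (h₁ : lagrangian G₀ G l₁ x₁ = 0) (h₂ : lagrangian G₀ G l₂ x₂ = 0) {σ : ℝ} (hσ : 0 ≤ σ)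
    (hred : ∀ v : ι → ℝ, σ * √(∑ i, v i ^ 2) ≤ ‖∑ i, v i • G i x₂‖) {S : ℝ}
    (hS : ∑ i, |l₁ i| ≤ S) :
    (σ / (L₀ + L * S)) ^ 2 * ∑ i, (l₂ i - l₁ i) ^ 2 ≤ ‖x₁ - x₂‖ ^ 2 := by
  have hS₀ : 0 ≤ S := (Finset.sum_nonneg fun i _ ↦ abs_nonneg (l₁ i)).trans hS
  have hdist : σ * √(∑ i, (l₂ i - l₁ i) ^ 2) ≤ ‖x₁ - x₂‖ * (L₀ + L * S) :=
    calc σ * √(∑ i, (l₂ i - l₁ i) ^ 2)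
        ≤ ‖∑ i, (l₂ i - l₁ i) • G i x₂‖ := hred fun i ↦ l₂ i - l₁ i
      _ ≤ (L₀ + L * ∑ i, |l₁ i|) * ‖x₁ - x₂‖ :=
        norm_sum_smul_le_of_lagrangian_eq_zero hG₀ hG h₁ h₂
      _ ≤ ‖x₁ - x₂‖ * (L₀ + L * S) := by
        rw [mul_comm]
        gcongr
  calc (σ / (L₀ + L * S)) ^ 2 * ∑ i, (l₂ i - l₁ i) ^ 2
      = (σ * √(∑ i, (l₂ i - l₁ i) ^ 2) / (L₀ + L * S)) ^ 2 := by
        rw [mul_div_right_comm, mul_pow, Real.sq_sqrt (by positivity)]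
    _ ≤ ‖x₁ - x₂‖ ^ 2 := by
        gcongr
        exact div_le_of_le_mul₀ (by positivity) (norm_nonneg _) hdist

end LagrangianGradient

theorem stmt14_general {H ι : Type*} [NormedAddCommGroup H] [InnerProductSpace ℝ H]
    [CompleteSpace H] [Fintype ι] {L₀ L : ℝ≥0} {μ : ℝ} (hμ : 0 ≤ μ)
    {ℓ₀ : H → ℝ} {G₀ : H → H} (hG₀ : ∀ x, HasGradientAt ℓ₀ (G₀ x) x) (hG₀lip : LipschitzWith L₀ G₀)
    {ℓ : ι → H → ℝ} {G : ι → H → H} (hG : ∀ i x, HasGradientAt (ℓ i) (G i x) x)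
    (hGlip : ∀ i, LipschitzWith L (G i))
    {Λ : Set (ι → ℝ)} (hΛcv : Convex ℝ Λ)
    (hcv : ∀ l ∈ Λ, StrongConvexOn univ μ (lagrangian ℓ₀ ℓ l))
    {xstar : (ι → ℝ) → H} (hmin : ∀ l ∈ Λ, IsMinOn (lagrangian ℓ₀ ℓ l) univ (xstar l))
    {σ : ℝ} (hσ : 0 ≤ σ)
    (hred : ∀ l ∈ Λ, ∀ v : ι → ℝ, σ * √(∑ i, v i ^ 2) ≤ ‖∑ i, v i • G i (xstar l)‖)
    {g : (ι → ℝ) → ℝ} (hg : ∀ l ∈ Λ, g l = lagrangian ℓ₀ ℓ l (xstar l)) :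
    (∀ l₁ ∈ Λ, ∀ l₂ ∈ Λ,
      μ * (σ / (L₀ + L * ∑ i, |l₁ i|)) ^ 2 * ∑ i, (l₂ i - l₁ i) ^ 2
        ≤ -∑ i, (ℓ i (xstar l₂) - ℓ i (xstar l₁)) * (l₂ i - l₁ i)) ∧
    (BddAbove ((fun l ↦ ∑ i, |l i|) '' Λ) →
      ∀ l₁ ∈ Λ, ∀ l₂ ∈ Λ, ∀ t : ℝ, 0 ≤ t → t ≤ 1 →
        t * g l₁ + (1 - t) * g l₂
            + (μ * (σ / (L₀ + L * sSup ((fun l ↦ ∑ i, |l i|) '' Λ))) ^ 2) / 2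
              * (t * (1 - t) * ∑ i, (l₁ i - l₂ i) ^ 2)
          ≤ g (t • l₁ + (1 - t) • l₂)) := by
  have hcrit : ∀ l ∈ Λ, lagrangian G₀ G l (xstar l) = 0 := fun l hl ↦
    eq_zero_of_hasGradientAt_of_isLocalMin (hasGradientAt_lagrangian (hG₀ _) (fun i ↦ hG i _) l)
      ((hmin l hl).isLocalMin univ_mem)
  have hdist {l₁ l₂ : ι → ℝ} (h₁ : l₁ ∈ Λ) (h₂ : l₂ ∈ Λ) {S : ℝ} (hS : ∑ i, |l₁ i| ≤ S) :
      μ * (σ / (L₀ + L * S)) ^ 2 * ∑ i, (l₂ i - l₁ i) ^ 2 ≤ μ * ‖xstar l₁ - xstar l₂‖ ^ 2 := by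
    rw [mul_assoc]
    gcongr
    exact sq_div_mul_sum_sq_le_sq_norm_sub_of_lagrangian_eq_zero hG₀lip hGlip (hcrit l₁ h₁)
      (hcrit l₂ h₂) hσ (hred l₂ h₂) hS
  refine ⟨fun l₁ h₁ l₂ h₂ ↦ (hdist h₁ h₂ le_rfl).trans ?_,
    fun hbdd l₁ h₁ l₂ h₂ t ht₀ ht₁ ↦ ?_⟩
  · exact mul_sq_norm_sub_le_neg_sum_of_isMinOn_lagrangian (mem_univ _) (mem_univ _)
      (hcv l₁ h₁) (hmin l₁ h₁) (hcv l₂ h₂) (hmin l₂ h₂)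
  · have ht : 0 ≤ 1 - t := sub_nonneg.2 ht₁
    have hl : t • l₁ + (1 - t) • l₂ ∈ Λ := hΛcv h₁ h₂ ht₀ ht (by ring)
    have hgrowth : ∀ k ∈ Λ, ∀ l ∈ Λ,
        g k + μ * (σ / (L₀ + L * sSup ((fun l ↦ ∑ i, |l i|) '' Λ))) ^ 2 / 2 *
          ∑ i, (l i - k i) ^ 2 ≤ lagrangian ℓ₀ ℓ k (xstar l) := fun k hk l hl ↦ by
      have hquad := add_modulus_le_of_isMinOn_of_uniformConvexOn (hcv k hk) (hmin k hk)
        (mem_univ _) (mem_univ (xstar l))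
      rw [hg k hk]
      linarith [hdist hk hl (le_csSup hbdd (mem_image_of_mem _ hk))]
    rw [hg _ hl]
    exact le_lagrangian_convex_combination ht₀ ht (by ring) (hgrowth l₁ h₁ _ hl)
      (hgrowth l₂ h₂ _ hl)

/-- in a real Hilbert space, with `ℓ₀(x) = ‖x − c₀‖²` and convex Fréchet
differentiable `ℓ₁, …, ℓ_m` whose gradients are 2-Lipschitz, if each Lagrangian
`x ↦ ℓ₀(x) + ∑ i, λᵢ ℓᵢ(x)` (for `λ` in a convex set `Λ ⊆ ℝ₊ᵐ`) has a global minimizer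
`x*(λ)`, and `‖∑ i, vᵢ ∇ℓᵢ(x*(λ))‖ ≥ σ‖v‖` for all `v` and `λ ∈ Λ`, then
`−(ℓ(x*(λ₂)) − ℓ(x*(λ₁)))ᵀ(λ₂ − λ₁) ≥ (1/2)(σ/(1 + ‖λ₁‖₁))² ‖λ₂ − λ₁‖²` for
`λ₁, λ₂ ∈ Λ`; consequently the dual function `g` is `μ`-strongly concave on `Λ` with
`μ = (1/2)(σ/(1 + sup_{λ∈Λ} ‖λ‖₁))²` whenever `sup_{λ∈Λ} ‖λ‖₁ < ∞`. -/
theorem stmt14 {H : Type*} [NormedAddCommGroup H] [InnerProductSpace ℝ H]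
    [CompleteSpace H] {m : ℕ} (c0 : H)
    (ℓ : Fin m → H → ℝ) (hℓcv : ∀ i, ConvexOn ℝ Set.univ (ℓ i))
    (G : Fin m → H → H) (hG : ∀ i x, HasGradientAt (ℓ i) (G i x) x)
    (hGlip : ∀ i, LipschitzWith 2 (G i))
    (Λ : Set (Fin m → ℝ)) (hΛ : ∀ l ∈ Λ, ∀ i, 0 ≤ l i) (hΛcv : Convex ℝ Λ)
    (xstar : (Fin m → ℝ) → H)
    (hmin : ∀ l ∈ Λ, ∀ y : H,
      ‖xstar l - c0‖ ^ 2 + ∑ i, l i * ℓ i (xstar l) ≤ ‖y - c0‖ ^ 2 + ∑ i, l i * ℓ i y)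
    (σ : ℝ) (hσ : 0 < σ)
    (hred : ∀ l ∈ Λ, ∀ v : Fin m → ℝ,
      σ * Real.sqrt (∑ i, v i ^ 2) ≤ ‖∑ i, v i • G i (xstar l)‖)
    (g : (Fin m → ℝ) → ℝ)
    (hg : ∀ l ∈ Λ, g l = ‖xstar l - c0‖ ^ 2 + ∑ i, l i * ℓ i (xstar l)) :
    (∀ l1 ∈ Λ, ∀ l2 ∈ Λ,
      (1 / 2) * (σ / (1 + ∑ i, |l1 i|)) ^ 2 * ∑ i, (l2 i - l1 i) ^ 2
        ≤ -∑ i, (ℓ i (xstar l2) - ℓ i (xstar l1)) * (l2 i - l1 i)) ∧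
    (BddAbove ((fun l => ∑ i, |l i|) '' Λ) →
      ∀ l1 ∈ Λ, ∀ l2 ∈ Λ, ∀ t : ℝ, 0 ≤ t → t ≤ 1 →
        t * g l1 + (1 - t) * g l2
            + ((1 / 2) * (σ / (1 + sSup ((fun l => ∑ i, |l i|) '' Λ))) ^ 2) / 2
              * (t * (1 - t) * ∑ i, (l1 i - l2 i) ^ 2)
          ≤ g (t • l1 + (1 - t) • l2)) := by
  have rescale (s : ℝ) : 2 * (σ / (‖(2 : ℝ)‖₊ + (2 : ℝ≥0) * s)) ^ 2 =
      1 / 2 * (σ / (1 + s)) ^ 2 := by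
    rw [Real.nnnorm_ofNat, NNReal.coe_ofNat, ← mul_one_add, div_mul_eq_div_div]
    ring
  simpa only [rescale] using stmt14_general zero_le_two (hasGradientAt_sq_norm_sub c0)
    (lipschitzWith_smul_sub 2 c0) hG hGlip hΛcv
    (fun l hl ↦ strongConvexOn_lagrangian (strongConvexOn_sq_norm_sub convex_univ c0) hℓcv
      (hΛ l hl))
    (fun l hl y _ ↦ hmin l hl y) hσ.le hred hg
end
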